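/- Let X^i_α : ℝ^p × ℝ^n → ℝ be smooth and suppose D_β X^i_α ≡ 0 for all i, α, β. Then a smooth map x : ℝ^p → ℝ^n is an extremal of the Lagrangian L = (½ h^{αβ} g_{ij} x^i_α x^j_β + f) √|det h|, where f(t,x) = ½ h^{αβ}(t) g_{ij}(x) X^i_α(t,x) X^j_β(t,x) is the potential energy, if and only if it satisfies the generalized Poisson system h^{αβ} x^i_{αβ} = g^{ih} h^{αβ} g_{kj} (∇_h X^k_α) X^j_β + h^{αβ} D_β X^i_α for all i (all quantities depending on (t,x) evaluated at (t, x(t))). -/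

import Mathlib

/-!
Write `E_k = ∂L/∂x^k - d/dt^α (∂L/∂x^k_α)` for the Euler–Lagrange expression. The proof shows

  `E_k = √|det h| (h^{αβ} g_{ij} (∇_k X^i_α) X^j_β - g_{kj} h^{αβ} x^j_{αβ})`

along any smooth map `x`. Since `√|det h|` never vanishes, raising the index `k` with the
inverse of `g` (`lower_eq_iff`) turns `E_k = 0` into the Poisson system, whose last term
`h^{αβ} D_β X^i_α` is zero by hypothesis.

The formula for `E_k` has two ingredients. For the potential, `pd_potE` gives
`∂f/∂x^k = h^{αβ} g_{ij} (∇_k X^i_α) X^j_β`, which is metric compatibility of the Levi-Civita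
connection contracted with the symmetric `h^{αβ}`. For the kinetic part, the momentum is
`√|det h| h^{αβ} g_{kj} x^j_β` (`dir_kinetic`), and its divergence is computed in `div_momentum`:
the derivative falling on `√|det h| h^{αβ}` produces the Christoffel symbols of `h` through
`∂_α (√|det h| h^{αβ}) = -√|det h| h^{αγ} H^β_{αγ}` (`div_density`, a consequence of Jacobi's
formula `dir_det` and of the derivative `dir_minv` of the inverse matrix), while the derivative
falling on `g_{kj}(x(t))`, together with the `x`-derivative of the kinetic energy, produces those
of `g` (`christoffel_quadratic`).
-/

open scoped BigOperators

noncomputable section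

/-- Partial derivative of `f : ℝ^m → ℝ` at `t` in the `α`-th coordinate direction. -/
def pd {m : ℕ} (α : Fin m) (f : (Fin m → ℝ) → ℝ) (t : Fin m → ℝ) : ℝ :=
  fderiv ℝ f t (Pi.single α 1)

/-- Componentwise inverse of a square array of reals (matrix inversion). -/
def minv {m : ℕ} (A : Fin m → Fin m → ℝ) : Fin m → Fin m → ℝ :=
  fun i j => (Matrix.of A)⁻¹ i j

/-- `√|det h(t)|`, the volume density of the metric `h`. -/
def sqrtDet {p : ℕ} (h : (Fin p → ℝ) → Fin p → Fin p → ℝ) (t : Fin p → ℝ) : ℝ :=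
  Real.sqrt |(Matrix.of (h t)).det|

/-- First jet `x^i_α = ∂x^i/∂t^α` of a map `x : ℝ^p → ℝ^n`. -/
def jet {p n : ℕ} (x : (Fin p → ℝ) → Fin n → ℝ) (t : Fin p → ℝ) :
    Fin n → Fin p → ℝ :=
  fun i α => pd α (fun s => x s i) t

/-- Christoffel symbols `G^i_{jk} = ½ g^{il}(∂g_{lj}/∂x^k + ∂g_{lk}/∂x^j − ∂g_{jk}/∂x^l)`. -/
def christoffel {m : ℕ} (g : (Fin m → ℝ) → Fin m → Fin m → ℝ)
    (i j k : Fin m) (q : Fin m → ℝ) : ℝ :=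
  (1 / 2) * ∑ l, minv (g q) i l *
    (pd k (fun y => g y l j) q + pd j (fun y => g y l k) q - pd l (fun y => g y j k) q)

/-- Covariant second jet
`x^i_{αβ} = ∂²x^i/∂t^α∂t^β − H^γ_{αβ} x^i_γ + G^i_{jk} x^j_α x^k_β`. -/
def covHess {p n : ℕ} (h : (Fin p → ℝ) → Fin p → Fin p → ℝ)
    (g : (Fin n → ℝ) → Fin n → Fin n → ℝ)
    (x : (Fin p → ℝ) → Fin n → ℝ) (i : Fin n) (α β : Fin p) (t : Fin p → ℝ) : ℝ :=
  pd α (fun s => jet x s i β) t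
    - (∑ γ, christoffel h γ α β t * jet x t i γ)
    + ∑ j, ∑ k, christoffel g i j k (x t) * jet x t j α * jet x t k β

/-- `∇_j X^i_α = ∂X^i_α/∂x^j + G^i_{jk} X^k_α`. -/
def nablaX {p n : ℕ} (g : (Fin n → ℝ) → Fin n → Fin n → ℝ)
    (X : Fin n → Fin p → (Fin p → ℝ) → (Fin n → ℝ) → ℝ)
    (j i : Fin n) (α : Fin p) (t : Fin p → ℝ) (q : Fin n → ℝ) : ℝ :=
  pd j (fun y => X i α t y) q + ∑ k, christoffel g i j k q * X k α t q

/-- `D_β X^i_α = ∂X^i_α/∂t^β − H^γ_{βα} X^i_γ`. -/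
def Dt {p n : ℕ} (h : (Fin p → ℝ) → Fin p → Fin p → ℝ)
    (X : Fin n → Fin p → (Fin p → ℝ) → (Fin n → ℝ) → ℝ)
    (β : Fin p) (i : Fin n) (α : Fin p) (t : Fin p → ℝ) (q : Fin n → ℝ) : ℝ :=
  pd β (fun s => X i α s q) t - ∑ γ, christoffel h γ β α t * X i γ t q

/-- External tensor `F_j{}^i{}_α = ∇_j X^i_α − g_{hj} g^{ik} ∇_k X^h_α`. -/
def Fext {p n : ℕ} (g : (Fin n → ℝ) → Fin n → Fin n → ℝ)
    (X : Fin n → Fin p → (Fin p → ℝ) → (Fin n → ℝ) → ℝ)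
    (j i : Fin n) (α : Fin p) (t : Fin p → ℝ) (q : Fin n → ℝ) : ℝ :=
  nablaX g X j i α t q
    - ∑ h', ∑ k, g q h' j * minv (g q) i k * nablaX g X k h' α t q

/-- Potential energy `f = ½ h^{αβ} g_{ij} X^i_α X^j_β`. -/
def potE {p n : ℕ} (h : (Fin p → ℝ) → Fin p → Fin p → ℝ)
    (g : (Fin n → ℝ) → Fin n → Fin n → ℝ)
    (X : Fin n → Fin p → (Fin p → ℝ) → (Fin n → ℝ) → ℝ)
    (t : Fin p → ℝ) (q : Fin n → ℝ) : ℝ :=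
  (1 / 2) * ∑ α, ∑ β, ∑ i, ∑ j, minv (h t) α β * g q i j * X i α t q * X j β t q

/-- A map `x` is an extremal of the first-order Lagrangian `L = L(t, x, x_·)` iff it
satisfies the Euler–Lagrange equations
`∂L/∂x^k − (d/dt^α)(∂L/∂x^k_α) = 0` along the first jet of `x`. -/
def IsExtremal {p n : ℕ}
    (L : (Fin p → ℝ) → (Fin n → ℝ) → (Fin n → Fin p → ℝ) → ℝ)
    (x : (Fin p → ℝ) → Fin n → ℝ) : Prop :=
  ∀ (t : Fin p → ℝ) (k : Fin n),
    fderiv ℝ (fun q => L t q (jet x t)) (x t) (Pi.single k 1)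
      - (∑ α, pd α
          (fun s => fderiv ℝ (fun v => L s (x s) v) (jet x s)
            (Pi.single k (Pi.single α 1))) t) = 0

/-! ### Directional derivatives, determinants and inverses -/

section calculus

variable {E : Type*} [NormedAddCommGroup E] [NormedSpace ℝ E]

theorem dir_mul {f₁ f₂ : E → ℝ} {y : E} (w : E) (h₁ : DifferentiableAt ℝ f₁ y)
    (h₂ : DifferentiableAt ℝ f₂ y) :
    fderiv ℝ (fun z => f₁ z * f₂ z) y w
      = fderiv ℝ f₁ y w * f₂ y + f₁ y * fderiv ℝ f₂ y w := by
  rw [fderiv_fun_mul h₁ h₂]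
  simp
  ring

theorem dir_add {f₁ f₂ : E → ℝ} {y : E} (w : E) (h₁ : DifferentiableAt ℝ f₁ y)
    (h₂ : DifferentiableAt ℝ f₂ y) :
    fderiv ℝ (fun z => f₁ z + f₂ z) y w = fderiv ℝ f₁ y w + fderiv ℝ f₂ y w := by
  rw [fderiv_fun_add h₁ h₂]
  simp

theorem dir_const_mul {f : E → ℝ} {y : E} (w : E) (c : ℝ) (hf : DifferentiableAt ℝ f y) :
    fderiv ℝ (fun z => c * f z) y w = c * fderiv ℝ f y w := by
  rw [fderiv_const_mul hf]
  simp

theorem dir_mul_const {f : E → ℝ} {y : E} (w : E) (c : ℝ) (hf : DifferentiableAt ℝ f y) :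
    fderiv ℝ (fun z => f z * c) y w = fderiv ℝ f y w * c := by
  rw [fderiv_mul_const hf]
  simp [mul_comm]

theorem dir_sum {ι : Type*} [Fintype ι] {f : ι → E → ℝ} {y : E} (w : E)
    (hf : ∀ i, DifferentiableAt ℝ (f i) y) :
    fderiv ℝ (fun z => ∑ i, f i z) y w = ∑ i, fderiv ℝ (f i) y w := by
  rw [fderiv_fun_sum (fun i _ => hf i)]
  simp

theorem differentiable_det {m : ℕ} {A : E → Matrix (Fin m) (Fin m) ℝ}
    (hA : ∀ i j, Differentiable ℝ fun z => A z i j) : Differentiable ℝ fun z => (A z).det := by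
  simp only [Matrix.det_apply']
  fun_prop

theorem differentiable_minv {m : ℕ} {A : E → Fin m → Fin m → ℝ}
    (hA : ∀ i j, Differentiable ℝ fun z => A z i j)
    (hdet : ∀ z, (Matrix.of (A z)).det ≠ 0) (i j : Fin m) :
    Differentiable ℝ fun z => minv (A z) i j := by
  have h1 : Differentiable ℝ fun z => (Matrix.of (A z)).det := differentiable_det hA
  have h2 : Differentiable ℝ fun z => (Matrix.of (A z)).adjugate i j := by
    simp only [Matrix.adjugate_apply]
    refine differentiable_det fun a b => ?_
    by_cases hab : a = j
    · subst hab; simp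
    · simpa [Matrix.updateRow_apply, hab] using hA a b
  have : (fun z => minv (A z) i j)
      = fun z => ((Matrix.of (A z)).det)⁻¹ * (Matrix.of (A z)).adjugate i j := by
    funext z
    simp [minv, Matrix.inv_def]
  rw [this]
  exact (h1.inv hdet).mul h2

theorem sum_minv_mul {m : ℕ} {A : Fin m → Fin m → ℝ} (hA : (Matrix.of A).det ≠ 0)
    (i k : Fin m) : ∑ j, minv A i j * A j k = if i = k then 1 else 0 := by
  have := congrFun (congrFun (Matrix.nonsing_inv_mul (Matrix.of A) hA.isUnit) i) k
  simpa [Matrix.mul_apply, Matrix.one_apply, minv] using this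

theorem sum_mul_minv {m : ℕ} {A : Fin m → Fin m → ℝ} (hA : (Matrix.of A).det ≠ 0)
    (i k : Fin m) : ∑ j, A i j * minv A j k = if i = k then 1 else 0 := by
  have := congrFun (congrFun (Matrix.mul_nonsing_inv (Matrix.of A) hA.isUnit) i) k
  simpa [Matrix.mul_apply, Matrix.one_apply, minv] using this

theorem minv_symm {m : ℕ} {A : Fin m → Fin m → ℝ} (hA : ∀ i j, A i j = A j i)
    (i j : Fin m) : minv A i j = minv A j i := by
  have h1 : (Matrix.of A).transpose = Matrix.of A := by
    ext a b
    simp [hA a b]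
  have h2 := congrFun (congrFun (Matrix.transpose_nonsing_inv (Matrix.of A)) i) j
  rw [h1, Matrix.transpose_apply] at h2
  exact h2.symm

/-- Jacobi's formula `∂ det A = det A · tr (A⁻¹ ∂A)`. -/
theorem dir_det {m : ℕ} {A : E → Fin m → Fin m → ℝ}
    (hA : ∀ i j, Differentiable ℝ fun z => A z i j) {y : E}
    (hdet : (Matrix.of (A y)).det ≠ 0) (w : E) :
    fderiv ℝ (fun z => (Matrix.of (A z)).det) y w
      = (Matrix.of (A y)).det
        * ∑ i, ∑ j, minv (A y) i j * fderiv ℝ (fun z => A z j i) y w := by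
  have key : ∀ i, (Matrix.of (A y)).det * ∑ j, minv (A y) i j * fderiv ℝ (fun z => A z j i) y w
      = ∑ σ : Equiv.Perm (Fin m), ((Equiv.Perm.sign σ : ℤ) : ℝ) *
        ((∏ j ∈ Finset.univ.erase i, A y (σ j) j) * fderiv ℝ (fun z => A z (σ i) i) y w) := by
    intro i
    have h1 : (Matrix.of (A y)).det * ∑ j, minv (A y) i j * fderiv ℝ (fun z => A z j i) y w
        = (Matrix.of (A y)).cramer (fun j => fderiv ℝ (fun z => A z j i) y w) i := by
      rw [Matrix.cramer_eq_adjugate_mulVec]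
      simp only [Matrix.mulVec, dotProduct, Finset.mul_sum]
      refine Finset.sum_congr rfl fun j _ => ?_
      simp only [minv, Matrix.inv_def, Matrix.smul_apply, Ring.inverse_eq_inv', smul_eq_mul]
      field_simp
    rw [h1, Matrix.cramer_apply, Matrix.det_apply']
    refine Finset.sum_congr rfl fun σ _ => ?_
    congr 1
    rw [← Finset.prod_erase_mul _ _ (Finset.mem_univ i)]
    congr 1
    · refine Finset.prod_congr rfl fun j hj => ?_
      simp [Finset.ne_of_mem_erase hj]
    · simp
  rw [Finset.mul_sum, Finset.sum_congr rfl fun i _ => key i, Finset.sum_comm]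
  simp only [Matrix.det_apply', Matrix.of_apply]
  rw [dir_sum w (fun σ => by fun_prop)]
  refine Finset.sum_congr rfl fun σ _ => ?_
  rw [dir_const_mul w _ (by fun_prop), ← Finset.mul_sum]
  congr 1
  rw [(HasFDerivAt.finsetProd (u := Finset.univ) (g := fun j z => A z (σ j) j)
    (fun j _ => (hA (σ j) j y).hasFDerivAt)).fderiv]
  simp

/-- This form of the density reduces its derivative to that of `log det`, whatever the sign
of the determinant (`Real.log` is even). -/
theorem sqrt_abs_eq_exp {d : ℝ} (hd : d ≠ 0) : √|d| = Real.exp ((1 / 2) * Real.log d) := by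
  rw [Real.sqrt_eq_rpow, Real.rpow_def_of_pos (abs_pos.mpr hd), Real.log_abs, mul_comm]

theorem differentiable_sqrtDet {m : ℕ} {A : (Fin m → ℝ) → Fin m → Fin m → ℝ}
    (hA : ∀ i j, Differentiable ℝ fun z => A z i j)
    (hdet : ∀ z, (Matrix.of (A z)).det ≠ 0) : Differentiable ℝ (sqrtDet A) := by
  have h1 : Differentiable ℝ fun z => (Matrix.of (A z)).det := differentiable_det hA
  have : sqrtDet A = fun z => Real.exp ((1 / 2) * Real.log (Matrix.of (A z)).det) :=
    funext fun z => sqrt_abs_eq_exp (hdet z)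
  rw [this]
  exact ((h1.log hdet).const_mul _).exp

theorem dir_sqrtDet {m : ℕ} {A : (Fin m → ℝ) → Fin m → Fin m → ℝ}
    (hA : ∀ i j, Differentiable ℝ fun z => A z i j)
    (hdet : ∀ z, (Matrix.of (A z)).det ≠ 0) (y w : Fin m → ℝ) :
    fderiv ℝ (sqrtDet A) y w
      = sqrtDet A y * ((1 / 2) * ∑ i, ∑ j, minv (A y) i j * fderiv ℝ (fun z => A z j i) y w) := by
  have h1 : Differentiable ℝ fun z => (Matrix.of (A z)).det := differentiable_det hA
  have : sqrtDet A = fun z => Real.exp ((1 / 2) * Real.log (Matrix.of (A z)).det) :=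
    funext fun z => sqrt_abs_eq_exp (hdet z)
  rw [this, fderiv_exp (((h1 y).log (hdet y)).const_mul _),
    fderiv_const_mul ((h1 y).log (hdet y)), fderiv.log (h1 y) (hdet y)]
  simp only [smul_apply, smul_eq_mul, dir_det hA (hdet y)]
  have := hdet y
  field_simp

/-- `∂A⁻¹ = -A⁻¹ (∂A) A⁻¹`. -/
theorem dir_minv {m : ℕ} {A : E → Fin m → Fin m → ℝ}
    (hA : ∀ i j, Differentiable ℝ fun z => A z i j)
    (hdet : ∀ z, (Matrix.of (A z)).det ≠ 0) (y w : E) (i k : Fin m) :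
    fderiv ℝ (fun z => minv (A z) i k) y w
      = -∑ a, ∑ b, minv (A y) i a * fderiv ℝ (fun z => A z a b) y w * minv (A y) b k := by
  have hm := differentiable_minv hA hdet
  have h0 : ∀ b, ∑ j, (fderiv ℝ (fun z => minv (A z) i j) y w * A y j b
      + minv (A y) i j * fderiv ℝ (fun z => A z j b) y w) = 0 := by
    intro b
    have h1 : (fun z => ∑ j, minv (A z) i j * A z j b) = fun _ => if i = b then 1 else 0 :=
      funext fun z => sum_minv_mul (hdet z) i b
    have h2 := dir_sum (f := fun j z => minv (A z) i j * A z j b) (y := y) w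
      (fun j => (hm i j y).mul (hA j b y))
    rw [h1] at h2
    simp only [fderiv_fun_const, Pi.zero_apply, zero_apply] at h2
    rw [h2]
    exact Finset.sum_congr rfl fun j _ => (dir_mul w (hm i j y) (hA j b y)).symm
  have h3 : ∑ b, (∑ j, (fderiv ℝ (fun z => minv (A z) i j) y w * A y j b
      + minv (A y) i j * fderiv ℝ (fun z => A z j b) y w)) * minv (A y) b k = 0 := by
    simp [h0]
  have h4 : ∑ b, (∑ j, fderiv ℝ (fun z => minv (A z) i j) y w * A y j b) * minv (A y) b k
      = fderiv ℝ (fun z => minv (A z) i k) y w := by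
    simp only [Finset.sum_mul]
    rw [Finset.sum_comm]
    simp only [mul_assoc, ← Finset.mul_sum, sum_mul_minv (hdet y)]
    simp
  simp only [Finset.sum_add_distrib, add_mul, h4] at h3
  rw [eq_neg_iff_add_eq_zero, ← h3, Finset.sum_comm]
  simp only [Finset.sum_mul]

end calculus

/-! ### Christoffel symbols -/

/-- Christoffel symbols of the first kind:
`g_{ki} G^i_{ab} = ½ (∂_b g_{ka} + ∂_a g_{kb} - ∂_k g_{ab})`. -/
theorem lower_christoffel {m : ℕ} {g : (Fin m → ℝ) → Fin m → Fin m → ℝ} {q : Fin m → ℝ}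
    (hdet : (Matrix.of (g q)).det ≠ 0) (k a b : Fin m) :
    ∑ i, g q k i * christoffel g i a b q
      = (1 / 2) * (pd b (fun y => g y k a) q + pd a (fun y => g y k b) q
          - pd k (fun y => g y a b) q) := by
  have : ∀ i, g q k i * christoffel g i a b q
      = ∑ l, (g q k i * minv (g q) i l) * ((1 / 2) * (pd b (fun y => g y l a) q
          + pd a (fun y => g y l b) q - pd l (fun y => g y a b) q)) := by
    intro i
    simp only [christoffel, Finset.mul_sum]
    exact Finset.sum_congr rfl fun l _ => by ring
  simp only [this]
  rw [Finset.sum_comm]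
  simp only [← Finset.sum_mul, sum_mul_minv hdet]
  simp

/-- The index algebra behind `div_density`, with `M` in the role of `h^{αβ}` and `T l a b` in the
role of `∂h_{ab}/∂t^l`. -/
theorem contraction_identity {m : ℕ} {M : Fin m → Fin m → ℝ} {T : Fin m → Fin m → Fin m → ℝ}
    (hM : ∀ a b, M a b = M b a) (hT : ∀ l a b, T l a b = T l b a) (b : Fin m) :
    ∑ a, ((1 / 2) * (∑ i, ∑ j, M i j * T a j i) * M a b
        - ∑ c, ∑ d, M a c * T a c d * M d b)
      = -∑ a, ∑ c, M a c * ((1 / 2) * ∑ l, M b l * (T c l a + T a l c - T l a c)) := by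
  have hP : ∑ a, (1 / 2) * (∑ i, ∑ j, M i j * T a j i) * M a b
      = (1 / 2) * ∑ a, ∑ c, ∑ l, M a c * M b l * T l a c := by
    simp only [Finset.mul_sum, Finset.sum_mul]
    rw [Finset.sum_comm]
    refine Finset.sum_congr rfl fun i _ => ?_
    rw [Finset.sum_comm]
    refine Finset.sum_congr rfl fun j _ => Finset.sum_congr rfl fun a _ => ?_
    rw [hT a j i, hM a b]
    ring
  have hQ : ∑ a, ∑ c, ∑ d, M a c * T a c d * M d b = ∑ a, ∑ c, ∑ l, M a c * M b l * T a l c := by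
    refine Finset.sum_congr rfl fun a _ => Finset.sum_congr rfl fun c _ =>
      Finset.sum_congr rfl fun d _ => ?_
    rw [hT a c d, hM d b]
    ring
  have hQ' : ∑ a, ∑ c, ∑ l, M a c * M b l * T c l a = ∑ a, ∑ c, ∑ l, M a c * M b l * T a l c := by
    rw [Finset.sum_comm]
    refine Finset.sum_congr rfl fun a _ => Finset.sum_congr rfl fun c _ =>
      Finset.sum_congr rfl fun d _ => ?_
    rw [hM c a]
  have hR : ∑ a, ∑ c, M a c * ((1 / 2) * ∑ l, M b l * (T c l a + T a l c - T l a c))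
      = (1 / 2) * (∑ a, ∑ c, ∑ l, M a c * M b l * T c l a
        + ∑ a, ∑ c, ∑ l, M a c * M b l * T a l c - ∑ a, ∑ c, ∑ l, M a c * M b l * T l a c) := by
    simp only [← Finset.sum_add_distrib, ← Finset.sum_sub_distrib, Finset.mul_sum]
    refine Finset.sum_congr rfl fun a _ => Finset.sum_congr rfl fun c _ =>
      Finset.sum_congr rfl fun d _ => ?_
    ring
  rw [Finset.sum_sub_distrib, hP, hQ, hR, hQ']
  ring

/-- The contracted Christoffel identity
`∂_α (√|det h| h^{αβ}) = -√|det h| h^{αγ} H^β_{αγ}`. -/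
theorem div_density {p : ℕ} {h : (Fin p → ℝ) → Fin p → Fin p → ℝ}
    (hsymm : ∀ t α β, h t α β = h t β α)
    (hh : ∀ α β, Differentiable ℝ fun t => h t α β)
    (hdet : ∀ t, (Matrix.of (h t)).det ≠ 0) (t : Fin p → ℝ) (β : Fin p) :
    ∑ α, pd α (fun s => sqrtDet h s * minv (h s) α β) t
      = -(sqrtDet h t * ∑ α, ∑ γ, minv (h t) α γ * christoffel h β α γ t) := by
  have h1 := contraction_identity (M := minv (h t)) (T := fun l a b => pd l (fun s => h s a b) t)
    (minv_symm (hsymm t)) (fun l a b => by simp only [hsymm _ a b]) β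
  have h2 : ∀ α, pd α (fun s => sqrtDet h s * minv (h s) α β) t = sqrtDet h t *
      ((1 / 2) * (∑ i, ∑ j, minv (h t) i j * pd α (fun s => h s j i) t) * minv (h t) α β
        - ∑ c, ∑ d, minv (h t) α c * pd α (fun s => h s c d) t * minv (h t) d β) := by
    intro α
    simp only [pd]
    rw [dir_mul _ (differentiable_sqrtDet hh hdet t) (differentiable_minv hh hdet α β t),
      dir_sqrtDet hh hdet, dir_minv hh hdet]
    ring
  simp only [h2, ← Finset.mul_sum, h1, christoffel]
  ring

/-- Relabelling `(α, i) ↔ (β, j)` under a symmetric contraction. -/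
theorem sum_swap {p n : ℕ} {M : Fin p → Fin p → ℝ} (hM : ∀ a b, M a b = M b a)
    (F : Fin p → Fin p → Fin n → Fin n → ℝ) :
    ∑ α, ∑ β, ∑ i, ∑ j, M α β * F β α j i = ∑ α, ∑ β, ∑ i, ∑ j, M α β * F α β i j := by
  rw [Finset.sum_comm]
  refine Finset.sum_congr rfl fun a _ => Finset.sum_congr rfl fun b _ => ?_
  rw [Finset.sum_comm]
  simp only [hM b a]

/-- `g_{kc} M^{αβ} G^c_{ab} v^a_α v^b_β
= M^{αβ} (∂_i g_{kj} - ½ ∂_k g_{ij}) v^i_α v^j_β`: since `M` is symmetric, the two first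
terms of the lowered Christoffel symbol contribute equally. -/
theorem christoffel_quadratic {p n : ℕ} {g : (Fin n → ℝ) → Fin n → Fin n → ℝ} {q : Fin n → ℝ}
    (hdet : (Matrix.of (g q)).det ≠ 0)
    {M : Fin p → Fin p → ℝ} (hM : ∀ a b, M a b = M b a) (v : Fin n → Fin p → ℝ) (k : Fin n) :
    ∑ j, g q k j * ∑ α, ∑ β, M α β * ∑ a, ∑ b, christoffel g j a b q * v a α * v b β
      = (∑ α, ∑ β, ∑ i, ∑ j, M α β * (pd i (fun y => g y k j) q * v i α * v j β))
        - (1 / 2) * ∑ α, ∑ β, ∑ i, ∑ j, M α β * (pd k (fun y => g y i j) q * v i α * v j β) := by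
  have h1 : ∑ j, g q k j * ∑ α, ∑ β, M α β * ∑ a, ∑ b, christoffel g j a b q * v a α * v b β
      = ∑ α, ∑ β, ∑ a, ∑ b, M α β
        * ((∑ j, g q k j * christoffel g j a b q) * v a α * v b β) := by
    simp only [Finset.mul_sum, Finset.sum_mul]
    rw [Finset.sum_comm]
    refine Finset.sum_congr rfl fun α _ => ?_
    rw [Finset.sum_comm]
    refine Finset.sum_congr rfl fun β _ => ?_
    rw [Finset.sum_comm]
    refine Finset.sum_congr rfl fun a _ => ?_
    rw [Finset.sum_comm]
    refine Finset.sum_congr rfl fun b _ => Finset.sum_congr rfl fun j _ => ?_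
    ring
  have h2 := sum_swap hM (fun α β i j => pd i (fun y => g y k j) q * v i α * v j β)
  have h3 : ∑ α, ∑ β, ∑ a, ∑ b, M α β
        * ((∑ j, g q k j * christoffel g j a b q) * v a α * v b β)
      = (1 / 2) * (∑ α, ∑ β, ∑ i, ∑ j, M α β * (pd j (fun y => g y k i) q * v j β * v i α)
        + ∑ α, ∑ β, ∑ i, ∑ j, M α β * (pd i (fun y => g y k j) q * v i α * v j β)
        - ∑ α, ∑ β, ∑ i, ∑ j, M α β * (pd k (fun y => g y i j) q * v i α * v j β)) := by
    simp only [lower_christoffel hdet, ← Finset.sum_add_distrib, ← Finset.sum_sub_distrib,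
      Finset.mul_sum]
    refine Finset.sum_congr rfl fun α _ => Finset.sum_congr rfl fun β _ =>
      Finset.sum_congr rfl fun a _ => Finset.sum_congr rfl fun b _ => ?_
    ring
  rw [h1, h3, h2]
  ring

/-- `∂f/∂x^k = h^{αβ} g_{ij} (∇_k X^i_α) X^j_β`. -/
theorem pd_potE {p n : ℕ} {h : (Fin p → ℝ) → Fin p → Fin p → ℝ}
    (hsymm : ∀ t α β, h t α β = h t β α)
    {g : (Fin n → ℝ) → Fin n → Fin n → ℝ}
    (gsymm : ∀ q i j, g q i j = g q j i)
    (hg : ∀ i j, Differentiable ℝ fun q => g q i j)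
    (gdet : ∀ q, (Matrix.of (g q)).det ≠ 0)
    {X : Fin n → Fin p → (Fin p → ℝ) → (Fin n → ℝ) → ℝ} {t : Fin p → ℝ}
    (hX : ∀ i α, Differentiable ℝ fun q => X i α t q) (q : Fin n → ℝ) (k : Fin n) :
    fderiv ℝ (fun q => potE h g X t q) q (Pi.single k 1)
      = ∑ α, ∑ β, ∑ i, ∑ j, minv (h t) α β * g q i j * nablaX g X k i α t q * X j β t q := by
  have h1 : fderiv ℝ (fun q => potE h g X t q) q (Pi.single k 1)
      = (1 / 2) * ∑ α, ∑ β, ∑ i, ∑ j, minv (h t) α β *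
        (pd k (fun y => g y i j) q * X i α t q * X j β t q
          + g q i j * pd k (fun y => X i α t y) q * X j β t q
          + g q i j * X i α t q * pd k (fun y => X j β t y) q) := by
    simp only [potE]
    rw [dir_const_mul _ _ (by fun_prop), dir_sum _ (fun α => by fun_prop)]
    congr 1
    refine Finset.sum_congr rfl fun α _ => ?_
    rw [dir_sum _ (fun α => by fun_prop)]
    refine Finset.sum_congr rfl fun β _ => ?_
    rw [dir_sum _ (fun α => by fun_prop)]
    refine Finset.sum_congr rfl fun i _ => ?_
    rw [dir_sum _ (fun α => by fun_prop)]
    refine Finset.sum_congr rfl fun j _ => ?_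
    rw [dir_mul _ (by fun_prop) (by fun_prop), dir_mul _ (by fun_prop) (by fun_prop),
      dir_const_mul _ _ (by fun_prop)]
    simp only [pd]
    ring
  have hM := minv_symm (hsymm t)
  have h2 := sum_swap hM
    (fun α β i j => g q i j * pd k (fun y => X i α t y) q * X j β t q)
  have h3 : ∑ α, ∑ β, ∑ i, ∑ j, minv (h t) α β
        * (g q i j * (∑ l, christoffel g i k l q * X l α t q) * X j β t q)
      = ∑ α, ∑ β, ∑ l, ∑ j, minv (h t) α β
        * ((1 / 2) * (pd l (fun y => g y j k) q + pd k (fun y => g y j l) q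
          - pd j (fun y => g y k l) q) * X l α t q * X j β t q) := by
    refine Finset.sum_congr rfl fun α _ => Finset.sum_congr rfl fun β _ => ?_
    rw [Finset.sum_comm]
    conv_rhs => rw [Finset.sum_comm]
    refine Finset.sum_congr rfl fun j _ => ?_
    simp only [← lower_christoffel (gdet q), Finset.mul_sum, Finset.sum_mul]
    rw [Finset.sum_comm]
    refine Finset.sum_congr rfl fun l _ => Finset.sum_congr rfl fun i _ => ?_
    rw [gsymm q i j]
    ring
  have h4 := sum_swap hM
    (fun α β i j => pd i (fun y => g y j k) q * X i α t q * X j β t q)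
  have h5 : ∑ α, ∑ β, ∑ l, ∑ j, minv (h t) α β
        * ((1 / 2) * (pd l (fun y => g y j k) q + pd k (fun y => g y j l) q
          - pd j (fun y => g y k l) q) * X l α t q * X j β t q)
      = (1 / 2) * (∑ α, ∑ β, ∑ i, ∑ j, minv (h t) α β
            * (pd i (fun y => g y j k) q * X i α t q * X j β t q)
          + ∑ α, ∑ β, ∑ i, ∑ j, minv (h t) α β
            * (pd k (fun y => g y i j) q * X i α t q * X j β t q)
          - ∑ α, ∑ β, ∑ i, ∑ j, minv (h t) α β
            * (pd j (fun y => g y i k) q * X j β t q * X i α t q)) := by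
    simp only [← Finset.sum_add_distrib, ← Finset.sum_sub_distrib, Finset.mul_sum]
    refine Finset.sum_congr rfl fun α _ => Finset.sum_congr rfl fun β _ =>
      Finset.sum_congr rfl fun a _ => Finset.sum_congr rfl fun b _ => ?_
    simp only [gsymm _ k a, gsymm _ b a]
    ring
  have h6 : ∑ α, ∑ β, ∑ i, ∑ j, minv (h t) α β
        * (g q i j * X i α t q * pd k (fun y => X j β t y) q)
      = ∑ α, ∑ β, ∑ i, ∑ j, minv (h t) α β
        * (g q j i * pd k (fun y => X j β t y) q * X i α t q) := by
    refine Finset.sum_congr rfl fun α _ => Finset.sum_congr rfl fun β _ =>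
      Finset.sum_congr rfl fun a _ => Finset.sum_congr rfl fun b _ => ?_
    rw [gsymm q a b]
    ring
  have h7 : ∑ α, ∑ β, ∑ i, ∑ j, minv (h t) α β * g q i j * nablaX g X k i α t q * X j β t q
      = ∑ α, ∑ β, ∑ i, ∑ j, minv (h t) α β
          * (g q i j * pd k (fun y => X i α t y) q * X j β t q)
        + ∑ α, ∑ β, ∑ i, ∑ j, minv (h t) α β
          * (g q i j * (∑ l, christoffel g i k l q * X l α t q) * X j β t q) := by
    simp only [← Finset.sum_add_distrib, nablaX]
    refine Finset.sum_congr rfl fun α _ => Finset.sum_congr rfl fun β _ =>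
      Finset.sum_congr rfl fun a _ => Finset.sum_congr rfl fun b _ => ?_
    ring
  rw [h1, h7, h3, h5, h4]
  simp only [mul_add, Finset.sum_add_distrib] at h6 ⊢
  rw [h6, h2]
  ring

/-! ### The Euler–Lagrange expression -/

/-- The momentum of the kinetic energy:
`∂/∂v^k_α (½ M^{αβ} g_{ij} v^i_α v^j_β) = M^{αβ} g_{kj} v^j_β`. -/
theorem dir_kinetic {p n : ℕ} {M : Fin p → Fin p → ℝ} (hM : ∀ a b, M a b = M b a)
    {G : Fin n → Fin n → ℝ} (hG : ∀ i j, G i j = G j i) (v : Fin n → Fin p → ℝ)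
    (k : Fin n) (α₀ : Fin p) :
    fderiv ℝ (fun v : Fin n → Fin p → ℝ =>
        (1 / 2) * ∑ α, ∑ β, ∑ i, ∑ j, M α β * G i j * v i α * v j β) v
        (Pi.single k (Pi.single α₀ 1))
      = ∑ β, ∑ j, M α₀ β * G k j * v j β := by
  set w : Fin n → Fin p → ℝ := Pi.single k (Pi.single α₀ 1) with hw
  have hcoord : ∀ i α, fderiv ℝ (fun v : Fin n → Fin p → ℝ => v i α) v w = w i α := by
    intro i α
    have : HasFDerivAt (fun v : Fin n → Fin p → ℝ => v i α)
        ((ContinuousLinearMap.proj (R := ℝ) (φ := fun _ : Fin p => ℝ) α).comp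
          (ContinuousLinearMap.proj (R := ℝ) (φ := fun _ : Fin n => Fin p → ℝ) i)) v :=
      ((ContinuousLinearMap.proj (R := ℝ) (φ := fun _ : Fin p => ℝ) α).comp
        (ContinuousLinearMap.proj (R := ℝ) (φ := fun _ : Fin n => Fin p → ℝ) i)).hasFDerivAt
    rw [this.fderiv]
    rfl
  have h1 : fderiv ℝ (fun v : Fin n → Fin p → ℝ =>
        (1 / 2) * ∑ α, ∑ β, ∑ i, ∑ j, M α β * G i j * v i α * v j β) v w
      = (1 / 2) * (∑ α, ∑ β, ∑ i, ∑ j, M α β * (G i j * w i α * v j β)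
        + ∑ α, ∑ β, ∑ i, ∑ j, M α β * (G j i * w j β * v i α)) := by
    rw [dir_const_mul _ _ (by fun_prop), dir_sum _ (fun α => by fun_prop)]
    simp only [← Finset.sum_add_distrib]
    congr 1
    refine Finset.sum_congr rfl fun α _ => ?_
    rw [dir_sum _ (fun α => by fun_prop)]
    refine Finset.sum_congr rfl fun β _ => ?_
    rw [dir_sum _ (fun α => by fun_prop)]
    refine Finset.sum_congr rfl fun i _ => ?_
    rw [dir_sum _ (fun α => by fun_prop)]
    refine Finset.sum_congr rfl fun j _ => ?_
    rw [dir_mul _ (by fun_prop) (by fun_prop), dir_const_mul _ _ (by fun_prop), hcoord, hcoord,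
      hG j i]
    ring
  have h2 : ∑ α, ∑ β, ∑ i, ∑ j, M α β * (G i j * w i α * v j β)
      = ∑ β, ∑ j, M α₀ β * G k j * v j β := by
    have hwv : ∀ i α, w i α = if i = k then (if α = α₀ then 1 else 0) else 0 := by
      intro i α
      by_cases hi : i = k
      · subst hi; simp [hw, Pi.single_apply]
      · simp [hw, hi]
    rw [Finset.sum_eq_single α₀]
    · refine Finset.sum_congr rfl fun β _ => ?_
      rw [Finset.sum_eq_single k]
      · refine Finset.sum_congr rfl fun j _ => ?_
        simp [hwv]
        ring
      · intro i _ hi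
        simp [hwv, hi]
      · simp
    · intro α _ hα
      simp [hwv, hα]
    · simp
  rw [h1, sum_swap hM (fun α β i j => G i j * w i α * v j β), h2]
  ring

/-- The partial derivative `∂/∂x^k` of the kinetic energy density. -/
theorem pd_kinetic {p n : ℕ} (M : Fin p → Fin p → ℝ) {g : (Fin n → ℝ) → Fin n → Fin n → ℝ}
    (hg : ∀ i j, Differentiable ℝ fun q => g q i j) (v : Fin n → Fin p → ℝ)
    (q : Fin n → ℝ) (k : Fin n) :
    fderiv ℝ (fun q => (1 / 2) * ∑ α, ∑ β, ∑ i, ∑ j, M α β * g q i j * v i α * v j β) q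
        (Pi.single k 1)
      = (1 / 2) * ∑ α, ∑ β, ∑ i, ∑ j, M α β * (pd k (fun y => g y i j) q * v i α * v j β) := by
  rw [dir_const_mul _ _ (by fun_prop), dir_sum _ (fun α => by fun_prop)]
  congr 1
  refine Finset.sum_congr rfl fun α _ => ?_
  rw [dir_sum _ (fun α => by fun_prop)]
  refine Finset.sum_congr rfl fun β _ => ?_
  rw [dir_sum _ (fun α => by fun_prop)]
  refine Finset.sum_congr rfl fun i _ => ?_
  rw [dir_sum _ (fun α => by fun_prop)]
  refine Finset.sum_congr rfl fun j _ => ?_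
  rw [dir_mul_const _ _ (by fun_prop), dir_mul_const _ _ (by fun_prop),
    dir_const_mul _ _ (by fun_prop)]
  simp only [pd]
  ring

theorem differentiable_jet {p n : ℕ} {x : (Fin p → ℝ) → Fin n → ℝ}
    (hx : ContDiff ℝ (⊤ : ℕ∞) x) (i : Fin n) (α : Fin p) :
    Differentiable ℝ fun s => jet x s i α := by
  have h1 : ContDiff ℝ (⊤ : ℕ∞) fun s => x s i := contDiff_pi.mp hx i
  have h2 : ContDiff ℝ 1 (fderiv ℝ fun s => x s i) := h1.fderiv_right (WithTop.coe_le_coe.mpr le_top)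
  exact (h2.differentiable (by norm_num)).clm_apply (differentiable_const _)

/-- Chain rule in coordinates: `∂_α (φ ∘ x) = (∂_l φ) x^l_α`. -/
theorem pd_comp {p n : ℕ} {φ : (Fin n → ℝ) → ℝ} (hφ : Differentiable ℝ φ)
    {x : (Fin p → ℝ) → Fin n → ℝ} (hx : Differentiable ℝ x) (α : Fin p) (t : Fin p → ℝ) :
    pd α (fun s => φ (x s)) t = ∑ l, pd l φ (x t) * jet x t l α := by
  have h1 : fderiv ℝ (fun s => φ (x s)) t = (fderiv ℝ φ (x t)).comp (fderiv ℝ x t) :=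
    fderiv_comp t (hφ (x t)) (hx t)
  have h2 : fderiv ℝ x t (Pi.single α 1) = fun l => jet x t l α := by
    funext l
    rw [fderiv_pi (fun i => differentiableAt_pi.mp (hx t) i)]
    rfl
  have h3 : (fun l => jet x t l α) = ∑ l, jet x t l α • (Pi.single l (1 : ℝ) : Fin n → ℝ) :=
    pi_eq_sum_univ' _
  simp only [pd, h1, ContinuousLinearMap.comp_apply, h2]
  rw [h3, map_sum]
  simp [mul_comm]

/-- The divergence of the momenta along the jet of `x`: up to the density `√|det h|` it is
the lowered tension field `g_{kj} h^{αβ} x^j_{αβ}` plus the `x`-derivative of the kinetic energy. -/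
theorem div_momentum {p n : ℕ} {h : (Fin p → ℝ) → Fin p → Fin p → ℝ}
    (hsymm : ∀ t α β, h t α β = h t β α)
    (hh : ∀ α β, Differentiable ℝ fun t => h t α β)
    (hdet : ∀ t, (Matrix.of (h t)).det ≠ 0)
    {g : (Fin n → ℝ) → Fin n → Fin n → ℝ}
    (hg : ∀ i j, Differentiable ℝ fun q => g q i j)
    (gdet : ∀ q, (Matrix.of (g q)).det ≠ 0)
    {x : (Fin p → ℝ) → Fin n → ℝ} (hx : ContDiff ℝ (⊤ : ℕ∞) x) (t : Fin p → ℝ) (k : Fin n) :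
    ∑ α, pd α (fun s => (∑ β, ∑ j, minv (h s) α β * g (x s) k j * jet x s j β) * sqrtDet h s) t
      = sqrtDet h t * ((∑ j, g (x t) k j * ∑ α, ∑ β, minv (h t) α β * covHess h g x j α β t)
        + (1 / 2) * ∑ α, ∑ β, ∑ i, ∑ j, minv (h t) α β
          * (pd k (fun y => g y i j) (x t) * jet x t i α * jet x t j β)) := by
  have hxd : Differentiable ℝ x := hx.differentiable (by simp)
  have hj := differentiable_jet hx
  have hm := differentiable_minv hh hdet
  have hs := differentiable_sqrtDet hh hdet
  have hgx : ∀ i j, Differentiable ℝ fun s => g (x s) i j := fun i j => (hg i j).comp hxd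
  have h1 : ∀ α, pd α (fun s => (∑ β, ∑ j, minv (h s) α β * g (x s) k j * jet x s j β)
        * sqrtDet h s) t
      = ∑ β, ∑ j, (pd α (fun s => sqrtDet h s * minv (h s) α β) t * (g (x t) k j * jet x t j β)
        + sqrtDet h t * minv (h t) α β
          * ((∑ l, pd l (fun y => g y k j) (x t) * jet x t l α) * jet x t j β
            + g (x t) k j * pd α (fun s => jet x s j β) t)) := by
    intro α
    have e : (fun s => (∑ β, ∑ j, minv (h s) α β * g (x s) k j * jet x s j β) * sqrtDet h s)
        = fun s => ∑ β, ∑ j, (sqrtDet h s * minv (h s) α β) * (g (x s) k j * jet x s j β) := by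
      funext s
      simp only [Finset.sum_mul]
      exact Finset.sum_congr rfl fun β _ => Finset.sum_congr rfl fun j _ => by ring
    rw [e]
    unfold pd
    rw [dir_sum _ (fun α => by fun_prop)]
    refine Finset.sum_congr rfl fun β _ => ?_
    rw [dir_sum _ (fun α => by fun_prop)]
    refine Finset.sum_congr rfl fun j _ => ?_
    rw [dir_mul _ (by fun_prop) (by fun_prop), dir_mul _ (hgx k j t) (hj j β t)]
    have := pd_comp (hg k j) hxd α t
    unfold pd at this
    rw [this]
  -- the three groups of terms: density, metric `g`, second derivatives
  have hA : ∑ α, ∑ β, ∑ j, pd α (fun s => sqrtDet h s * minv (h s) α β) t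
        * (g (x t) k j * jet x t j β)
      = -(sqrtDet h t * ∑ j, g (x t) k j * ∑ α, ∑ β, minv (h t) α β
          * ∑ γ, christoffel h γ α β t * jet x t j γ) := by
    rw [Finset.sum_comm]
    have e1 : ∀ β, ∑ α, ∑ j, pd α (fun s => sqrtDet h s * minv (h s) α β) t
        * (g (x t) k j * jet x t j β)
        = ∑ j, -(sqrtDet h t * ∑ α, ∑ γ, minv (h t) α γ * christoffel h β α γ t)
          * (g (x t) k j * jet x t j β) := by
      intro β
      rw [Finset.sum_comm]
      simp only [← Finset.sum_mul, div_density hsymm hh hdet]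
    simp only [e1]
    rw [Finset.sum_comm]
    simp only [Finset.mul_sum, neg_mul, Finset.sum_mul, Finset.sum_neg_distrib]
    congr 1
    refine Finset.sum_congr rfl fun j _ => ?_
    rw [Finset.sum_comm]
    refine Finset.sum_congr rfl fun α _ => ?_
    rw [Finset.sum_comm]
    refine Finset.sum_congr rfl fun β _ => Finset.sum_congr rfl fun γ _ => ?_
    ring
  have hB : ∑ α, ∑ β, ∑ j, sqrtDet h t * minv (h t) α β
        * ((∑ l, pd l (fun y => g y k j) (x t) * jet x t l α) * jet x t j β)
      = sqrtDet h t * ∑ α, ∑ β, ∑ i, ∑ j, minv (h t) α β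
          * (pd i (fun y => g y k j) (x t) * jet x t i α * jet x t j β) := by
    simp only [Finset.mul_sum, Finset.sum_mul]
    refine Finset.sum_congr rfl fun α _ => Finset.sum_congr rfl fun β _ => ?_
    rw [Finset.sum_comm]
    refine Finset.sum_congr rfl fun i _ => Finset.sum_congr rfl fun j _ => ?_
    ring
  have hC : ∑ α, ∑ β, ∑ j, sqrtDet h t * minv (h t) α β
        * (g (x t) k j * pd α (fun s => jet x s j β) t)
      = sqrtDet h t * ∑ j, g (x t) k j * ∑ α, ∑ β, minv (h t) α β
          * pd α (fun s => jet x s j β) t := by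
    simp only [Finset.mul_sum]
    conv_rhs => rw [Finset.sum_comm]
    refine Finset.sum_congr rfl fun α _ => ?_
    conv_rhs => rw [Finset.sum_comm]
    refine Finset.sum_congr rfl fun β _ => Finset.sum_congr rfl fun j _ => ?_
    ring
  have hD : ∑ j, g (x t) k j * ∑ α, ∑ β, minv (h t) α β * covHess h g x j α β t
      = ∑ j, g (x t) k j * ∑ α, ∑ β, minv (h t) α β * pd α (fun s => jet x s j β) t
        - ∑ j, g (x t) k j * ∑ α, ∑ β, minv (h t) α β
          * ∑ γ, christoffel h γ α β t * jet x t j γ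
        + ∑ j, g (x t) k j * ∑ α, ∑ β, minv (h t) α β
          * ∑ a, ∑ b, christoffel g j a b (x t) * jet x t a α * jet x t b β := by
    simp only [covHess, mul_add, mul_sub, Finset.sum_add_distrib, Finset.sum_sub_distrib]
  simp only [h1, mul_add, Finset.sum_add_distrib]
  rw [hA, hB, hC, hD, christoffel_quadratic (gdet (x t)) (minv_symm (hsymm t))]
  ring

/-- Raising an index: `b_k = g_{kj} a^j` for all `k` iff `a^i = g^{ik} b_k` for all `i`. -/
theorem lower_eq_iff {n : ℕ} {G : Fin n → Fin n → ℝ} (hG : (Matrix.of G).det ≠ 0)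
    (a b : Fin n → ℝ) :
    (∀ k, b k = ∑ j, G k j * a j) ↔ ∀ i, a i = ∑ k, minv G i k * b k := by
  constructor
  · intro H i
    simp only [H, Finset.mul_sum]
    rw [Finset.sum_comm]
    simp only [← mul_assoc, ← Finset.sum_mul, sum_minv_mul hG]
    simp
  · intro H i
    simp only [H, Finset.mul_sum]
    rw [Finset.sum_comm]
    simp only [← mul_assoc, ← Finset.sum_mul, sum_mul_minv hG]
    simp

/-- when `D_β X^i_α ≡ 0`, extremals of
`L = (½ h^{αβ} g_{ij} x^i_α x^j_β + f)√|det h|` are exactly the solutions of the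
generalized Poisson system (12). -/
theorem extremal_iff_poisson_system_of_Dt_zero
    {p n : ℕ} (hp : 0 < p) (hn : 0 < n)
    (h : (Fin p → ℝ) → Fin p → Fin p → ℝ)
    (hsymm : ∀ t α β, h t α β = h t β α)
    (hsmooth : ∀ α β, ContDiff ℝ (⊤ : ℕ∞) fun t => h t α β)
    (hdet : ∀ t, (Matrix.of (h t)).det ≠ 0)
    (g : (Fin n → ℝ) → Fin n → Fin n → ℝ)
    (gsymm : ∀ q i j, g q i j = g q j i)
    (gsmooth : ∀ i j, ContDiff ℝ (⊤ : ℕ∞) fun q => g q i j)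
    (gdet : ∀ q, (Matrix.of (g q)).det ≠ 0)
    (X : Fin n → Fin p → (Fin p → ℝ) → (Fin n → ℝ) → ℝ)
    (Xsmooth : ∀ i α, ContDiff ℝ (⊤ : ℕ∞) fun z : (Fin p → ℝ) × (Fin n → ℝ) => X i α z.1 z.2)
    (hD : ∀ (i : Fin n) (α β : Fin p) (t : Fin p → ℝ) (q : Fin n → ℝ),
      Dt h X β i α t q = 0)
    (x : (Fin p → ℝ) → Fin n → ℝ) (hx : ContDiff ℝ (⊤ : ℕ∞) x) :
    IsExtremal
      (fun t q v =>
        ((1 / 2) * (∑ α, ∑ β, ∑ i, ∑ j, minv (h t) α β * g q i j * v i α * v j β)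
          + potE h g X t q) * sqrtDet h t) x
      ↔ ∀ (t : Fin p → ℝ) (i : Fin n),
          ∑ α, ∑ β, minv (h t) α β * covHess h g x i α β t
            = (∑ h', ∑ α, ∑ β, ∑ k, ∑ j, minv (g (x t)) i h' * minv (h t) α β
                * g (x t) k j * nablaX g X h' k α t (x t) * X j β t (x t))
              + (∑ α, ∑ β, minv (h t) α β * Dt h X β i α t (x t)) := by
  have hh : ∀ α β, Differentiable ℝ fun t => h t α β :=
    fun α β => (hsmooth α β).differentiable (by simp)
  have hg : ∀ i j, Differentiable ℝ fun q => g q i j :=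
    fun i j => (gsmooth i j).differentiable (by simp)
  have hX : ∀ t i α, Differentiable ℝ fun q => X i α t q := fun t i α =>
    ((Xsmooth i α).differentiable (by simp)).comp
      ((differentiable_const t).prodMk differentiable_id)
  have hs : ∀ t, sqrtDet h t ≠ 0 := fun t =>
    (Real.sqrt_pos.mpr (abs_pos.mpr (hdet t))).ne'
  unfold IsExtremal
  refine forall_congr' fun t => ?_
  have hM := fun s => minv_symm (hsymm s)
  -- the Euler–Lagrange expression, divided by the density, is `∂_k f - g_{kj} h^{αβ} x^j_{αβ}`
  have hEL : ∀ k, fderiv ℝ (fun q =>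
        ((1 / 2) * (∑ α, ∑ β, ∑ i, ∑ j,
            minv (h t) α β * g q i j * jet x t i α * jet x t j β)
          + potE h g X t q) * sqrtDet h t) (x t) (Pi.single k 1)
      - (∑ α, pd α (fun s => fderiv ℝ (fun v : Fin n → Fin p → ℝ =>
          ((1 / 2) * (∑ α, ∑ β, ∑ i, ∑ j, minv (h s) α β * g (x s) i j * v i α * v j β)
            + potE h g X s (x s)) * sqrtDet h s) (jet x s)
          (Pi.single k (Pi.single α 1))) t)
      = sqrtDet h t * ((∑ α, ∑ β, ∑ i, ∑ j, minv (h t) α β * g (x t) i j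
          * nablaX g X k i α t (x t) * X j β t (x t))
        - ∑ j, g (x t) k j * ∑ α, ∑ β, minv (h t) α β * covHess h g x j α β t) := by
    intro k
    have hpot : Differentiable ℝ fun q => potE h g X t q := by
      have := hX t
      unfold potE
      fun_prop
    have e : ∀ α s, fderiv ℝ (fun v : Fin n → Fin p → ℝ =>
          ((1 / 2) * (∑ α, ∑ β, ∑ i, ∑ j, minv (h s) α β * g (x s) i j * v i α * v j β)
            + potE h g X s (x s)) * sqrtDet h s) (jet x s) (Pi.single k (Pi.single α 1))
        = (∑ β, ∑ j, minv (h s) α β * g (x s) k j * jet x s j β) * sqrtDet h s := by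
      intro α s
      rw [dir_mul_const _ _ (by fun_prop), fderiv_add_const, dir_kinetic (hM s) (gsymm (x s))]
    simp only [e]
    rw [div_momentum hsymm hh hdet hg gdet hx, dir_mul_const _ _ (by fun_prop),
      dir_add _ (by fun_prop) (hpot _), pd_kinetic _ hg, pd_potE hsymm gsymm hg gdet (hX t)]
    ring
  simp only [hEL, mul_eq_zero, hs t, false_or, sub_eq_zero]
  rw [lower_eq_iff (gdet (x t)) (fun j => ∑ α, ∑ β, minv (h t) α β * covHess h g x j α β t)]
  refine forall_congr' fun i => ?_
  have e : (∑ h', ∑ α, ∑ β, ∑ k, ∑ j, minv (g (x t)) i h' * minv (h t) α β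
        * g (x t) k j * nablaX g X h' k α t (x t) * X j β t (x t))
      = ∑ h', minv (g (x t)) i h' * ∑ α, ∑ β, ∑ k, ∑ j, minv (h t) α β * g (x t) k j
          * nablaX g X h' k α t (x t) * X j β t (x t) := by
    simp only [Finset.mul_sum, mul_assoc]
  rw [e]
  simp only [hD, mul_zero, Finset.sum_const_zero, add_zero]
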